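/- Let n ≥ 2 be an integer and let R_n = (ℤ[1/n!])[t] be the polynomial ring in one variable over the subring ℤ[1/n!] of ℚ. Then every proper ideal I of R_n satisfies card(R_n/I) > n, and for every finite field F whose characteristic is greater than n there exists a surjective ring homomorphism R_n → F. -/

import Mathlib

/-!
Since `n!` is a unit in `R_n`, it is a unit in every quotient of `R_n`. A nonzero ring with at most
`n` elements has an order that divides `n!` and annihilates `1`, so `n!` vanishes in it and cannot
be a unit. On the other hand, `n!` is nonzero in a field `F` of characteristic `p > n`, hence
`ℤ → F` extends to `ℤ[1/n!]`; when `F` is finite, sending `t` to a generator of the cyclic group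
`Fˣ` gives a surjection.
-/

open Cardinal Polynomial

section Index

theorem natCast_lt_mk_of_isUnit_factorial {R : Type*} [Ring R] [Nontrivial R] {n : ℕ}
    (hn : IsUnit (n.factorial : R)) : (n : Cardinal) < #R := by
  by_contra! hle
  have : Finite R := Cardinal.lt_aleph0_iff_finite.mp (hle.trans_lt natCast_lt_aleph0)
  have := Fintype.ofFinite R
  have card_le : Fintype.card R ≤ n := by simpa only [mk_fintype, Nat.cast_le] using hle
  have card_dvd : (Fintype.card R : R) ∣ (n.factorial : R) :=
    Nat.cast_dvd_cast (Nat.dvd_factorial Fintype.card_pos card_le)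
  rw [Nat.cast_card_eq_zero, zero_dvd_iff] at card_dvd
  exact not_isUnit_zero (card_dvd ▸ hn)

theorem natCast_lt_mk_quotient_of_isUnit_factorial {R : Type*} [Ring R] {n : ℕ}
    (hn : IsUnit (n.factorial : R)) {I : Ideal R} [I.IsTwoSided] (hI : I ≠ ⊤) :
    (n : Cardinal) < #(R ⧸ I) := by
  have : Nontrivial (R ⧸ I) := Ideal.Quotient.nontrivial_iff.mpr hI
  exact natCast_lt_mk_of_isUnit_factorial <| by simpa using hn.map (Ideal.Quotient.mk I)

end Index

section AdjoinInv

variable {A : Type*} (K : Type*) [CommRing A] [IsDomain A] [Field K] [Algebra A K]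
  [IsFractionRing A K]

theorem adjoin_inv_eq_ofField_powers {r : A} (hr : r ≠ 0) :
    Algebra.adjoin A {(algebraMap A K r)⁻¹} =
      Localization.subalgebra.ofField K (Submonoid.powers r)
        (powers_le_nonZeroDivisors_of_noZeroDivisors hr) := by
  apply le_antisymm
  · rw [Algebra.adjoin_le_iff, Set.singleton_subset_iff]
    exact ⟨1, r, Submonoid.mem_powers r, by simp⟩
  · rintro _ ⟨a, _, ⟨k, rfl⟩, rfl⟩
    rw [map_pow, ← inv_pow]
    exact mul_mem (algebraMap_mem _ a) (pow_mem (Algebra.self_mem_adjoin_singleton A _) k)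

theorem isLocalizationAway_closure_inv [IsFractionRing ℤ K] {m : ℤ} (hm : m ≠ 0) :
    IsLocalization.Away m (Subring.closure {(m : K)⁻¹}) := by
  have h := Localization.subalgebra.isLocalization_ofField K (Submonoid.powers m)
    (powers_le_nonZeroDivisors_of_noZeroDivisors hm)
  rw [← adjoin_inv_eq_ofField_powers K hm, Algebra.adjoin_int] at h
  exact h

end AdjoinInv

section FiniteField

variable {R F : Type*} [Field F] [Finite F]

theorem exists_surjective_eval₂RingHom [CommSemiring R] (f : R →+* F) :
    ∃ a : F, Function.Surjective (eval₂RingHom f a) := by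
  obtain ⟨g, hg⟩ := IsCyclic.exists_monoid_generator (α := Fˣ)
  refine ⟨g, fun y ↦ ?_⟩
  rcases eq_or_ne y 0 with rfl | hy
  · exact ⟨0, map_zero _⟩
  · obtain ⟨k, hk : g ^ k = Units.mk0 y hy⟩ := hg (Units.mk0 y hy)
    exact ⟨X ^ k, by simpa using congrArg Units.val hk⟩

theorem exists_surjective_polynomial_of_lt_ringChar [CommRing R] {n : ℕ}
    [IsLocalization.Away (n.factorial : ℤ) R] (hn : n < ringChar F) :
    ∃ φ : R[X] →+* F, Function.Surjective φ := by
  have : Fact (ringChar F).Prime := ⟨CharP.prime_ringChar F⟩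
  have hunit : IsUnit (Int.castRingHom F (n.factorial : ℤ)) := by
    simpa using (IsUnit.natCast_factorial_iff_of_charP (A := F) (ringChar F)).mpr hn
  obtain ⟨a, ha⟩ := exists_surjective_eval₂RingHom (IsLocalization.Away.lift (S := R) _ hunit)
  exact ⟨_, ha⟩

end FiniteField

/-- the ring `R_n = ℤ[1/n!][t]` has no proper ideals of index ≤ n and
surjects onto every finite field of characteristic greater than n. -/
theorem stmt_13 (n : ℕ) (hn : 2 ≤ n) :
    (∀ I : Ideal (Polynomial ↥(Subring.closure {((n.factorial : ℚ))⁻¹})), I ≠ ⊤ →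
      (n : Cardinal) <
        Cardinal.mk (Polynomial ↥(Subring.closure {((n.factorial : ℚ))⁻¹}) ⧸ I)) ∧
    (∀ (F : Type) [Field F] [Finite F], n < ringChar F →
      ∃ φ : Polynomial ↥(Subring.closure {((n.factorial : ℚ))⁻¹}) →+* F,
        Function.Surjective φ) := by
  have hloc : IsLocalization.Away (n.factorial : ℤ) (Subring.closure {(n.factorial : ℚ)⁻¹}) := by
    rw [← Int.cast_natCast]
    exact isLocalizationAway_closure_inv ℚ (Nat.cast_ne_zero.mpr n.factorial_ne_zero)
  have hunit : IsUnit (n.factorial : (Subring.closure {(n.factorial : ℚ)⁻¹})[X]) := by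
    rw [← map_natCast C, ← map_natCast (algebraMap ℤ _)]
    exact (IsLocalization.Away.algebraMap_isUnit (n.factorial : ℤ)).map C
  exact ⟨fun _ hI ↦ natCast_lt_mk_quotient_of_isUnit_factorial hunit hI,
    fun _ _ _ hF ↦ exists_surjective_polynomial_of_lt_ringChar hF⟩
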